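/- Let W, L be independent bounded nonnegative random variables with L ≤ ℓ_max almost surely. For κ ≥ 0, define I(κ) = E[A_{κ,d}(W,L)]. Then I(κ) ≥ I(ℓ_max) for all κ ≥ 0, and I(κ) = I(ℓ_max) for all κ ≥ ℓ_max. -/

import Mathlib

open MeasureTheory ProbabilityTheory

noncomputable def A (κ d w ℓ : ℝ) : ℝ :=
  if d ≤ w then (w + d) * ℓ
  else if ℓ < κ then 2 * w * ℓ
  else (ℓ - κ) * (d - w) + 2 * w * ℓ

lemma nullMeasurableSet_of_add_compl_le_one {Ω : Type*} [MeasurableSpace Ω] {μ : Measure Ω}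
    [IsProbabilityMeasure μ] {s : Set Ω} (h : μ s + μ sᶜ ≤ 1) : NullMeasurableSet s μ := by
  have hm : MeasurableSet (toMeasurable μ sᶜ)ᶜ := (measurableSet_toMeasurable _ _).compl
  have hsub : (toMeasurable μ sᶜ)ᶜ ⊆ s := Set.compl_subset_comm.1 (subset_toMeasurable _ _)
  have hle : μ s ≤ μ (toMeasurable μ sᶜ)ᶜ := by
    rw [prob_compl_eq_one_sub (measurableSet_toMeasurable _ _), measure_toMeasurable]
    exact ENNReal.le_sub_of_add_le_right (measure_ne_top _ _) h
  exact hm.nullMeasurableSet.congr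
    (ae_eq_of_subset_of_measure_ge hsub hle hm.nullMeasurableSet (measure_ne_top _ _))

/-- A function whose push-forward outer measure is additive on Borel sets at positive distance is
a.e.-measurable, by Carathéodory's criterion. -/
lemma aemeasurable_of_measure_preimage_union {Ω : Type*} [MeasurableSpace Ω] {μ : Measure Ω}
    [IsProbabilityMeasure μ] {U : Ω → ℝ}
    (h : ∀ s t : Set ℝ, MeasurableSet s → MeasurableSet t → ∀ ε > 0,
      (∀ x ∈ s, ∀ y ∈ t, ε ≤ dist x y) → μ (U ⁻¹' s) + μ (U ⁻¹' t) ≤ μ (U ⁻¹' (s ∪ t))) :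
    AEMeasurable U μ := by
  set m : OuterMeasure ℝ := OuterMeasure.map U μ.toOuterMeasure
  have m_apply (s : Set ℝ) : m s = μ (U ⁻¹' s) := rfl
  have hmetric : m.trim.IsMetric := by
    rintro s t ⟨r, hr0, hr⟩
    refine le_antisymm (measure_union_le _ _) ?_
    obtain ⟨ε, hε, hεr⟩ : ∃ ε : ℝ, 0 < ε ∧ ENNReal.ofReal ε ≤ r := by
      rcases eq_or_ne r ⊤ with rfl | hrt
      · exact ⟨1, one_pos, le_top⟩
      · exact ⟨r.toReal, ENNReal.toReal_pos hr0 hrt, (ENNReal.ofReal_toReal hrt).le⟩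
    have hdist : ∀ x ∈ s, ∀ y ∈ t, ε ≤ dist x y := fun x hx y hy ↦ by
      have := hεr.trans (hr x hx y hy)
      rwa [edist_dist, ENNReal.ofReal_le_ofReal_iff dist_nonneg] at this
    obtain ⟨B, hB, hBm, hBeq⟩ := m.exists_measurable_superset_eq_trim (s ∪ t)
    have hsm : MeasurableSet (B ∩ Metric.thickening (ε / 3) s) :=
      hBm.inter Metric.isOpen_thickening.measurableSet
    have htm : MeasurableSet (B ∩ Metric.thickening (ε / 3) t) :=
      hBm.inter Metric.isOpen_thickening.measurableSet
    have hs : s ⊆ B ∩ Metric.thickening (ε / 3) s := Set.subset_inter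
      (Set.subset_union_left.trans hB) (Metric.self_subset_thickening (by positivity) _)
    have ht : t ⊆ B ∩ Metric.thickening (ε / 3) t := Set.subset_inter
      (Set.subset_union_right.trans hB) (Metric.self_subset_thickening (by positivity) _)
    calc m.trim s + m.trim t
        ≤ m (B ∩ Metric.thickening (ε / 3) s) + m (B ∩ Metric.thickening (ε / 3) t) := by
          rw [← m.trim_eq hsm, ← m.trim_eq htm]
          gcongr
      _ ≤ m (B ∩ Metric.thickening (ε / 3) s ∪ B ∩ Metric.thickening (ε / 3) t) := by
          refine h _ _ hsm htm (ε / 3) (by positivity) ?_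
          rintro x ⟨-, hx⟩ y ⟨-, hy⟩
          obtain ⟨x', hx's, hx'⟩ := Metric.mem_thickening_iff.1 hx
          obtain ⟨y', hy't, hy'⟩ := Metric.mem_thickening_iff.1 hy
          have h₁ := dist_triangle4 x' x y y'
          have h₂ := hdist x' hx's y' hy't
          rw [dist_comm x' x] at h₁
          linarith
      _ ≤ m B := measure_mono (Set.union_subset Set.inter_subset_left Set.inter_subset_left)
      _ = m.trim (s ∪ t) := hBeq
  refine NullMeasurable.aemeasurable fun s hs ↦ nullMeasurableSet_of_add_compl_le_one ?_
  have hadd := (OuterMeasure.isCaratheodory_iff _).1 (hmetric.le_caratheodory s hs) Set.univ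
  rw [Set.univ_inter, ← Set.compl_eq_univ_sdiff, m.trim_eq hs, m.trim_eq hs.compl,
    m.trim_eq MeasurableSet.univ, m_apply, m_apply, m_apply] at hadd
  rw [← Set.preimage_compl, ← hadd]
  exact prob_le_one

/-- If the product of two independent functions is a.e.-measurable, then so is the bounded factor
when the other one is not a.e. zero. Independence of functions which are not assumed measurable is
understood in terms of outer measures. -/
lemma ProbabilityTheory.IndepFun.aemeasurable_left_of_mul {Ω : Type*} [MeasurableSpace Ω]
    {μ : Measure Ω} [IsProbabilityMeasure μ] {U V : Ω → ℝ} (hUV : IndepFun U V μ) {B : ℝ}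
    (hU : ∀ ω, |U ω| ≤ B) (hV : μ {ω | 0 < V ω} ≠ 0)
    (hmul : AEMeasurable (fun ω ↦ U ω * V ω) μ) : AEMeasurable U μ := by
  refine aemeasurable_of_measure_preimage_union fun s t hs ht ε hε hst ↦ ?_
  have hB : 0 ≤ B := by
    by_contra! hB
    refine hV ?_
    have : {ω | 0 < V ω} = ∅ :=
      Set.eq_empty_of_forall_notMem fun ω _ ↦ by linarith [hU ω, abs_nonneg (U ω)]
    simp [this]
  set δ : ℝ := ε / (2 * (B + 1)) with hδ
  have hδ0 : 0 < δ := by positivity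
  have hBδ : B * δ < ε / 2 := by
    rw [hδ, mul_div_assoc', div_lt_div_iff₀ (by positivity) (by positivity)]
    nlinarith
  obtain ⟨c, hc0, hc⟩ : ∃ c : ℝ, 0 < c ∧ μ (V ⁻¹' Set.Icc c (c * (1 + δ))) ≠ 0 := by
    by_contra! hzero
    refine hV (measure_mono_null ?_ (measure_iUnion_null fun q : {q : ℚ // (0 : ℝ) < q} ↦
      hzero q q.2))
    intro ω (hω : 0 < V ω)
    obtain ⟨q, hq₁, hq₂⟩ := exists_rat_btwn (div_lt_self hω (by linarith : 1 < 1 + δ))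
    have hq0 : (0 : ℝ) < q := lt_trans (by positivity) hq₁
    rw [div_lt_iff₀ (by positivity)] at hq₁
    exact Set.mem_iUnion.2 ⟨⟨q, hq0⟩, hq₂.le, hq₁.le⟩
  set T := Set.Icc c (c * (1 + δ))
  have hTm : MeasurableSet T := measurableSet_Icc
  have hclose (ω : Ω) (hω : V ω ∈ T) : dist (U ω * V ω / c) (U ω) < ε / 2 := by
    have h₀ : 0 ≤ V ω / c - 1 := by
      rw [sub_nonneg, le_div_iff₀ hc0]; linarith [hω.1]
    have h₁ : V ω / c - 1 ≤ δ := by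
      rw [sub_le_iff_le_add, div_le_iff₀ hc0]; linarith [hω.2]
    have h₂ : U ω * V ω / c - U ω = U ω * (V ω / c - 1) := by ring
    rw [Real.dist_eq, h₂, abs_mul, abs_of_nonneg h₀]
    exact (mul_le_mul (hU ω) h₁ h₀ hB).trans_lt hBδ
  set G : Set Ω := (fun ω ↦ U ω * V ω / c) ⁻¹' Metric.thickening (ε / 2) s
  have hG : NullMeasurableSet G μ :=
    (hmul.div_const c).nullMeasurable Metric.isOpen_thickening.measurableSet
  have hindep := indepFun_iff_measure_inter_preimage_eq_mul.1 hUV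
  have hadd : μ (U ⁻¹' s ∩ V ⁻¹' T) + μ (U ⁻¹' t ∩ V ⁻¹' T) ≤ μ (U ⁻¹' (s ∪ t) ∩ V ⁻¹' T) := by
    rw [← measure_inter_add_sdiff₀ (U ⁻¹' (s ∪ t) ∩ V ⁻¹' T) hG]
    refine add_le_add (measure_mono ?_) (measure_mono ?_)
    · rintro ω ⟨hωs, hωT⟩
      exact ⟨⟨Or.inl hωs, hωT⟩, Metric.mem_thickening_iff.2 ⟨U ω, hωs, hclose ω hωT⟩⟩
    · rintro ω ⟨hωt, hωT⟩
      refine ⟨⟨Or.inr hωt, hωT⟩, fun hωG ↦ ?_⟩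
      obtain ⟨x, hxs, hx⟩ := Metric.mem_thickening_iff.1 hωG
      have h₁ := hst x hxs (U ω) hωt
      have h₂ := dist_triangle_left x (U ω) (U ω * V ω / c)
      linarith [hclose ω hωT]
  rw [hindep s T hs hTm, hindep t T ht hTm, hindep _ T (hs.union ht) hTm, ← add_mul] at hadd
  exact (ENNReal.mul_le_mul_iff_left hc (measure_ne_top _ _)).1 hadd

lemma A_eq_of_le {κ d w ℓ : ℝ} (h : ℓ ≤ κ) : A κ d w ℓ = (w + min w d) * ℓ := by
  unfold A
  split_ifs with hw hℓ
  · rw [min_eq_right hw]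
  · rw [min_eq_left (not_le.1 hw).le]; ring
  · rw [min_eq_left (not_le.1 hw).le, le_antisymm h (not_lt.1 hℓ)]; ring

lemma A_eq_add (κ d w ℓ : ℝ) :
    A κ d w ℓ = (w + min w d) * ℓ + max (ℓ - κ) 0 * max (d - w) 0 := by
  unfold A
  split_ifs with hw hℓ
  · rw [min_eq_right hw, max_eq_right (sub_nonpos.2 hw)]; ring
  · rw [min_eq_left (not_le.1 hw).le, max_eq_right (sub_nonpos.2 hℓ.le)]; ring
  · rw [min_eq_left (not_le.1 hw).le, max_eq_left (sub_nonneg.2 (not_lt.1 hℓ)),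
      max_eq_left (sub_nonneg.2 (not_le.1 hw).le)]
    ring

theorem I_maximized_at_ellmax
    {Ω : Type*} [MeasureSpace Ω] [IsProbabilityMeasure (volume : Measure Ω)]
    (W L : Ω → ℝ) (hWL : IndepFun W L)
    (hW0 : ∀ ω, 0 ≤ W ω) (hL0 : ∀ ω, 0 ≤ L ω)
    (Wmax ℓmax : ℝ) (hWb : ∀ ω, W ω ≤ Wmax) (hLb : ∀ᵐ ω, L ω ≤ ℓmax)
    (d : ℝ) (hd : 0 < d)
    (I : ℝ → ℝ) (hI : ∀ κ, I κ = ∫ ω, A κ d (W ω) (L ω)) :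
    (∀ κ, 0 ≤ κ → I ℓmax ≤ I κ) ∧ (∀ κ, ℓmax ≤ κ → I κ = I ℓmax) := by
  have hconst (κ : ℝ) (hκ : ℓmax ≤ κ) : I κ = ∫ ω, (W ω + min (W ω) d) * L ω := by
    rw [hI]
    refine integral_congr_ae ?_
    filter_upwards [hLb] with ω hω using A_eq_of_le (hω.trans hκ)
  refine ⟨fun κ hκ ↦ ?_, fun κ hκ ↦ (hconst κ hκ).trans (hconst ℓmax le_rfl).symm⟩
  rw [hconst ℓmax le_rfl, hI κ]
  simp only [A_eq_add]
  set U : Ω → ℝ := fun ω ↦ W ω + min (W ω) d with hUdef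
  have hU0 (ω : Ω) : 0 ≤ U ω := add_nonneg (hW0 ω) (le_min (hW0 ω) hd.le)
  by_cases hzero : ∫ ω, U ω * L ω = 0
  · rw [hzero]
    exact integral_nonneg fun ω ↦ add_nonneg (mul_nonneg (hU0 ω) (hL0 ω))
      (mul_nonneg (le_max_right _ _) (le_max_right _ _))
  have hint : Integrable fun ω ↦ U ω * L ω := by
    by_contra hni
    exact hzero (integral_undef hni)
  set L' : Ω → ℝ := fun ω ↦ min (L ω) ℓmax
  have hLL' : L =ᵐ[volume] L' := by
    filter_upwards [hLb] with ω hω using (min_eq_left hω).symm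
  have hℓ0 : 0 ≤ ℓmax := by
    obtain ⟨ω, hω⟩ := hLb.exists
    exact (hL0 ω).trans hω
  have hmul : AEMeasurable fun ω ↦ U ω * L' ω := by
    refine hint.aemeasurable.congr ?_
    filter_upwards [hLL'] with ω hω using by rw [hω]
  have hUL' : IndepFun U L' := hWL.comp (φ := fun w ↦ w + min w d) (ψ := fun l ↦ min l ℓmax)
    (by fun_prop) (by fun_prop)
  have hUpos : volume {ω | 0 < U ω} ≠ 0 := fun h ↦ hzero <| integral_eq_zero_of_ae <| by
    filter_upwards [measure_eq_zero_iff_ae_notMem.1 h] with ω hω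
    have : U ω = 0 := le_antisymm (not_lt.1 hω) (hU0 ω)
    simp [this]
  have hL'pos : volume {ω | 0 < L' ω} ≠ 0 := fun h ↦ hzero <| integral_eq_zero_of_ae <| by
    filter_upwards [measure_eq_zero_iff_ae_notMem.1 h, hLL'] with ω hω hω'
    have : L ω = 0 := le_antisymm (hω' ▸ not_lt.1 hω) (hL0 ω)
    simp [this]
  have hUm : AEMeasurable U := hUL'.aemeasurable_left_of_mul (B := Wmax + d) (fun ω ↦ by
    rw [abs_of_nonneg (hU0 ω)]
    exact add_le_add (hWb ω) (min_le_right _ _)) hL'pos hmul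
  have hLm : AEMeasurable L := by
    refine AEMeasurable.congr (hUL'.symm.aemeasurable_left_of_mul (B := ℓmax) (fun ω ↦ ?_) hUpos
      (by simpa only [mul_comm] using hmul)) hLL'.symm
    rw [abs_of_nonneg (le_min (hL0 ω) hℓ0)]
    exact min_le_right _ _
  have hWm : AEMeasurable W := by
    have hW : W = fun ω ↦ max (U ω / 2) (U ω - d) := by
      ext ω
      simp only [hUdef]
      rcases le_total (W ω) d with h | h
      · rw [min_eq_left h, max_eq_left (by linarith)]; ring
      · rw [min_eq_right h, max_eq_right (by linarith)]; ring
    rw [hW]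
    fun_prop
  have hint' : Integrable fun ω ↦ max (L ω - κ) 0 * max (d - W ω) 0 := by
    refine Integrable.of_bound (by fun_prop) (ℓmax * d) ?_
    filter_upwards [hLb] with ω hω
    rw [Real.norm_of_nonneg (mul_nonneg (le_max_right _ _) (le_max_right _ _))]
    exact mul_le_mul (max_le (by linarith) hℓ0) (max_le (by linarith [hW0 ω]) hd.le)
      (le_max_right _ _) hℓ0
  rw [integral_add hint hint', le_add_iff_nonneg_right]
  exact integral_nonneg fun ω ↦ mul_nonneg (le_max_right _ _) (le_max_right _ _)
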